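/- Let P and R be probability measures on a measurable space and γ ≥ 1. Then the function G : (0,∞) → [0,∞) defined by G(t) = t · E_{1 + (γ−1)/t}(P‖R) is monotonically increasing. -/

import Mathlib

open MeasureTheory Real

/-- The hockey-stick divergence `E_γ(P‖Q) = sup_{A measurable} P(A) - γ Q(A)`. -/
noncomputable def hsDiv {α : Type*} [MeasurableSpace α] (γ : ℝ)
    (P Q : Measure α) : ℝ :=
  ⨆ A : {A : Set α // MeasurableSet A}, ((P A.1).toReal - γ * (Q A.1).toReal)

theorem stmt3 {α : Type*} [MeasurableSpace α] (P R : Measure α)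
    [IsProbabilityMeasure P] [IsProbabilityMeasure R] (γ : ℝ) (hγ : 1 ≤ γ) :
    ∀ t₁ t₂ : ℝ, 0 < t₁ → t₁ ≤ t₂ →
      t₁ * hsDiv (1 + (γ - 1) / t₁) P R ≤ t₂ * hsDiv (1 + (γ - 1) / t₂) P R := by
  intro t₁ t₂ h1 h12
  have h2 : 0 < t₂ := lt_of_lt_of_le h1 h12
  have hc : 0 ≤ (γ - 1) / t₂ := div_nonneg (by linarith) h2.le
  have bdd : BddAbove (Set.range fun A : {A : Set α // MeasurableSet A} =>
      ((P A.1).toReal - (1 + (γ - 1) / t₂) * (R A.1).toReal)) := by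
    refine ⟨1, ?_⟩
    rintro _ ⟨A, rfl⟩
    have hp : (P A.1).toReal ≤ 1 := ENNReal.toReal_le_of_le_ofReal zero_le_one (by simpa using prob_le_one)
    have hr : 0 ≤ (R A.1).toReal := ENNReal.toReal_nonneg
    have := mul_nonneg (by linarith : 0 ≤ 1 + (γ - 1) / t₂) hr
    simp only
    linarith
  have le2 : ∀ A : {A : Set α // MeasurableSet A},
      (P A.1).toReal - (1 + (γ - 1) / t₂) * (R A.1).toReal ≤ hsDiv (1 + (γ - 1) / t₂) P R :=
    fun A => le_ciSup bdd A
  have nn : 0 ≤ hsDiv (1 + (γ - 1) / t₂) P R := by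
    simpa using le2 ⟨∅, MeasurableSet.empty⟩
  rw [mul_comm, ← le_div_iff₀ h1]
  haveI : Nonempty {A : Set α // MeasurableSet A} := ⟨⟨∅, MeasurableSet.empty⟩⟩
  refine ciSup_le fun A => ?_
  rw [le_div_iff₀ h1]
  have hr : 0 ≤ (R A.1).toReal := ENNReal.toReal_nonneg
  have key := mul_le_mul_of_nonneg_left (le2 A) h2.le
  have e1 : ((P A.1).toReal - (1 + (γ - 1) / t₁) * (R A.1).toReal) * t₁
      = t₁ * ((P A.1).toReal - (R A.1).toReal) - (γ - 1) * (R A.1).toReal := by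
    field_simp
    ring
  have e2 : t₂ * ((P A.1).toReal - (1 + (γ - 1) / t₂) * (R A.1).toReal)
      = t₂ * ((P A.1).toReal - (R A.1).toReal) - (γ - 1) * (R A.1).toReal := by
    field_simp
    ring
  rw [e1]
  rw [e2] at key
  rcases le_total (R A.1).toReal (P A.1).toReal with h | h
  · have := mul_le_mul_of_nonneg_right h12 (sub_nonneg.2 h)
    linarith
  · have a := mul_nonneg h1.le (sub_nonneg.2 h)
    have b := mul_nonneg (sub_nonneg.2 hγ) hr
    have c := mul_nonneg h2.le nn
    linarith
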